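/- arXiv:2410.21526 — 3 statements merged into one kernel-verified Lean document; each statement's English description precedes it below -/
import Mathlib

section
/- Let X and Y be finite nonempty types, let P and Q be probability mass functions on X × Y with Q(x,y) > 0 for every (x,y) and equal marginals on X (for every x, Σ_y P(x,y) = Σ_y Q(x,y)), and let r : X × Y → ℝ satisfy 0 < r(x,y) ≤ 1 for all (x,y). Let (Ω, μ) be a probability space and let (ξ_i)_{i∈ℕ}, ξ_i : Ω → X × Y, be independent random variables, each distributed according to Q (i.e., μ(ξ_i = z) = Q(z) for every z and every i). Define the weight w(x,y) := (P(x,y)/P_X(x)) · (Q_X(x)/Q(x,y)), where P_X(x) := Σ_y P(x,y) and Q_X(x) := Σ_y Q(x,y), and the empirical importance-weighted loss L_N(ω) := -(1/N) Σ_{i=0}^{N-1} w(ξ_i(ω)) · log r(ξ_i(ω)). Then L_N converges in probability to the real-world expected cross-entropy: for every ε > 0, μ{ω : |L_N(ω) - Σ_{(x,y)} P(x,y) · (-log r(x,y))| ≥ ε} → 0 as N → ∞. -/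
open Finset MeasureTheory Filter

/-!
The common marginal on `X` cancels in the weight `w`, so `Q z * w z = P z` for every `z` (both sides
vanish off the support of `Q`). Hence the weighted loss `w • ℓ` has mean `∑ z, P z • ℓ z` under `Q`,
and the law of large numbers applies to it.
-/

section WeakLaw

open ProbabilityTheory

variable {Ω Z E : Type*} [MeasurableSpace Ω] [MeasurableSpace Z] {μ : Measure Ω}

theorem hasLaw_sum_smul_dirac [Countable Z] [MeasurableSingletonClass Z] {ξ : Ω → Z}
    {c : Z → ENNReal} (hξ : AEMeasurable ξ μ) (hc : ∀ z, μ (ξ ⁻¹' {z}) = c z) :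
    HasLaw ξ (Measure.sum fun z ↦ c z • Measure.dirac z) μ where
  aemeasurable := hξ
  map_eq := Measure.ext_of_singleton fun z ↦ by
    rw [Measure.map_apply_of_aemeasurable hξ (measurableSet_singleton z), hc,
      Measure.sum_smul_dirac_singleton]

variable [NormedAddCommGroup E] [NormedSpace ℝ E] [CompleteSpace E]

theorem tendstoInMeasure_average_of_hasLaw {ν : Measure Z} {ξ : ℕ → Ω → Z} {f : Z → E}
    (hlaw : ∀ i, HasLaw (ξ i) ν μ) (hindep : Pairwise fun i j ↦ IndepFun (ξ i) (ξ j) μ)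
    (hf : Integrable f ν) :
    TendstoInMeasure μ (fun (N : ℕ) ω ↦ (N : ℝ)⁻¹ • ∑ i ∈ range N, f (ξ i ω)) atTop
      fun _ ↦ ∫ z, f z ∂ν := by
  borelize E
  have hf_map (i : ℕ) : Integrable f (μ.map (ξ i)) := by rwa [(hlaw i).map_eq]
  have hint (i : ℕ) : Integrable (f ∘ ξ i) μ := (hf_map i).comp_aemeasurable (hlaw i).aemeasurable
  have hindep_comp : Pairwise fun i j ↦ IndepFun (f ∘ ξ i) (f ∘ ξ j) μ := fun i j hij ↦
    (hindep hij).comp₀ (hlaw i).aemeasurable (hlaw j).aemeasurable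
      (hf_map i).aestronglyMeasurable.aemeasurable (hf_map j).aestronglyMeasurable.aemeasurable
  have hident (i : ℕ) : IdentDistrib (f ∘ ξ i) (f ∘ ξ 0) μ μ :=
    ((hlaw i).identDistrib (hlaw 0)).comp_of_aemeasurable
      (hf_map i).aestronglyMeasurable.aemeasurable
  have hmean : ∫ ω, (f ∘ ξ 0) ω ∂μ = ∫ z, f z ∂ν :=
    (hlaw 0).integral_comp hf.aestronglyMeasurable
  rw [← hmean]
  refine tendstoInMeasure_of_tendsto_eLpNorm one_ne_zero (fun N ↦ ?_) aestronglyMeasurable_const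
    (strong_law_Lp le_rfl ENNReal.one_ne_top (fun i ↦ f ∘ ξ i) (memLp_one_iff_integrable.2 (hint 0))
      hindep_comp hident)
  exact ((integrable_finsetSum _ fun i _ ↦ hint i).smul (N : ℝ)⁻¹).aestronglyMeasurable

variable [Countable Z] [MeasurableSingletonClass Z]

theorem tendstoInMeasure_average_of_countable {c : Z → ENNReal} {ξ : ℕ → Ω → Z} {f : Z → E}
    (hc : ∀ z, c z ≠ ⊤) (hf : Summable fun z ↦ (c z).toReal * ‖f z‖)
    (hξ : ∀ i, AEMeasurable (ξ i) μ) (hindep : Pairwise fun i j ↦ IndepFun (ξ i) (ξ j) μ)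
    (hdist : ∀ i z, μ (ξ i ⁻¹' {z}) = c z) :
    TendstoInMeasure μ (fun (N : ℕ) ω ↦ (N : ℝ)⁻¹ • ∑ i ∈ range N, f (ξ i ω)) atTop
      fun _ ↦ ∑' z, (c z).toReal • f z := by
  rw [← integral_sum_dirac_eq_tsum hc hf]
  exact tendstoInMeasure_average_of_hasLaw (fun i ↦ hasLaw_sum_smul_dirac (hξ i) (hdist i)) hindep
    (integrable_sum_dirac hc hf)

theorem tendstoInMeasure_weighted_average {P Q w : Z → ℝ} {ξ : ℕ → Ω → Z} {f : Z → E}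
    (hQ0 : ∀ z, 0 ≤ Q z) (hw : ∀ z, Q z * w z = P z) (hPf : Summable fun z ↦ ‖P z • f z‖)
    (hξ : ∀ i, AEMeasurable (ξ i) μ) (hindep : Pairwise fun i j ↦ IndepFun (ξ i) (ξ j) μ)
    (hdist : ∀ i z, μ (ξ i ⁻¹' {z}) = ENNReal.ofReal (Q z)) :
    TendstoInMeasure μ (fun (N : ℕ) ω ↦ (N : ℝ)⁻¹ • ∑ i ∈ range N, w (ξ i ω) • f (ξ i ω)) atTop
      fun _ ↦ ∑' z, P z • f z := by
  have htoReal (z : Z) : (ENNReal.ofReal (Q z)).toReal = Q z := ENNReal.toReal_ofReal (hQ0 z)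
  have hnorm (z : Z) : Q z * ‖w z • f z‖ = ‖P z • f z‖ := by
    rw [← hw z, mul_smul, norm_smul (Q z), Real.norm_of_nonneg (hQ0 z)]
  have hlim := tendstoInMeasure_average_of_countable (f := fun z ↦ w z • f z)
    (fun _ ↦ ENNReal.ofReal_ne_top) (by simpa only [htoReal, hnorm] using hPf) hξ hindep hdist
  simpa only [htoReal, smul_smul, hw] using hlim

end WeakLaw

section ImportanceWeight

variable {X Y : Type*} {P Q : X × Y → ℝ}

/-- The importance weight `P(y|x) / Q(y|x)` of `z = (x, y)`, which turns averages under `Q` into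
averages under `P`; the marginals are `tsum`s so that `Y` may be infinite. -/
noncomputable def importanceWeight (P Q : X × Y → ℝ) (z : X × Y) : ℝ :=
  (P z / ∑' y, P (z.1, y)) * ((∑' y, Q (z.1, y)) / Q z)

theorem mul_importanceWeight (z : X × Y) (hQ0 : ∀ y, 0 ≤ Q (z.1, y))
    (hQ : Summable fun y ↦ Q (z.1, y)) (hac : Q z = 0 → P z = 0)
    (hmarg : ∑' y, P (z.1, y) = ∑' y, Q (z.1, y)) :
    Q z * importanceWeight P Q z = P z := by
  rcases eq_or_ne (Q z) 0 with hz | hz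
  · rw [hz, hac hz, zero_mul]
  · have hmarg_pos : 0 < ∑' y, Q (z.1, y) := hQ.tsum_pos hQ0 z.2 ((hQ0 z.2).lt_of_ne' hz)
    rw [importanceWeight, hmarg]
    field_simp

theorem imp_loss_convergence_in_probability_general [Countable X] [Countable Y]
    [MeasurableSpace (X × Y)] [MeasurableSingletonClass (X × Y)]
    {E : Type*} [NormedAddCommGroup E] [NormedSpace ℝ E] [CompleteSpace E] {ℓ : X × Y → E}
    {Ω : Type*} [MeasurableSpace Ω] {μ : Measure Ω} {ξ : ℕ → Ω → X × Y}
    (hQ0 : ∀ z, 0 ≤ Q z) (hQ : Summable Q) (hac : ∀ z, Q z = 0 → P z = 0)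
    (hmarg : ∀ x, ∑' y, P (x, y) = ∑' y, Q (x, y)) (hℓ : Summable fun z ↦ ‖P z • ℓ z‖)
    (hξ : ∀ i, AEMeasurable (ξ i) μ)
    (hindep : Pairwise fun i j ↦ ProbabilityTheory.IndepFun (ξ i) (ξ j) μ)
    (hdist : ∀ i z, μ (ξ i ⁻¹' {z}) = ENNReal.ofReal (Q z)) :
    TendstoInMeasure μ
      (fun (N : ℕ) ω ↦ (N : ℝ)⁻¹ • ∑ i ∈ range N, importanceWeight P Q (ξ i ω) • ℓ (ξ i ω)) atTop
      fun _ ↦ ∑' z, P z • ℓ z :=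
  tendstoInMeasure_weighted_average hQ0
    (fun z ↦ mul_importanceWeight z (fun _ ↦ hQ0 _) (hQ.prod_factor z.1) (hac z) (hmarg z.1))
    hℓ hξ hindep hdist

end ImportanceWeight

/-- Asymptotic convergence of the Importance Loss (IMP-Loss): the empirical weighted
cross-entropy computed on i.i.d. samples from the synthetic distribution `Q` converges
in probability to the expected cross-entropy under the real-world distribution `P`. -/
theorem imp_loss_convergence_in_probability
    {X Y : Type*} [Fintype X] [Fintype Y] [Nonempty X] [Nonempty Y]
    (P Q : X × Y → ℝ)
    (hP0 : ∀ z, 0 ≤ P z) (hP1 : ∑ z : X × Y, P z = 1)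
    (hQ0 : ∀ z, 0 < Q z) (hQ1 : ∑ z : X × Y, Q z = 1)
    (hmarg : ∀ x : X, ∑ y : Y, P (x, y) = ∑ y : Y, Q (x, y))
    (r : X × Y → ℝ) (hr0 : ∀ z, 0 < r z) (hr1 : ∀ z, r z ≤ 1)
    {Ω : Type*} [MeasurableSpace Ω] (μ : Measure Ω) [IsProbabilityMeasure μ]
    (ξ : ℕ → Ω → X × Y)
    (hmeas : ∀ i, @Measurable Ω (X × Y) _ ⊤ (ξ i))
    (hindep : ProbabilityTheory.iIndepFun (m := fun _ => (⊤ : MeasurableSpace (X × Y))) ξ μ)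
    (hdist : ∀ i, ∀ z : X × Y, μ (ξ i ⁻¹' {z}) = ENNReal.ofReal (Q z)) :
    ∀ ε : ℝ, 0 < ε →
      Tendsto
        (fun N : ℕ =>
          μ {ω : Ω |
              ε ≤ |(-(1 / (N : ℝ)) * ∑ i ∈ Finset.range N,
                      ((P (ξ i ω) / ∑ y : Y, P ((ξ i ω).1, y))
                          * ((∑ y : Y, Q ((ξ i ω).1, y)) / Q (ξ i ω)))
                        * Real.log (r (ξ i ω)))
                  - ∑ z : X × Y, P z * (-Real.log (r z))|})
        atTop (nhds 0) := by
  let _ : MeasurableSpace (X × Y) := ⊤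
  simpa [tendstoInMeasure_iff_norm, importanceWeight] using
    imp_loss_convergence_in_probability_general (ℓ := fun z ↦ -Real.log (r z))
      (fun z ↦ (hQ0 z).le) .of_finite (fun z hz ↦ absurd hz (hQ0 z).ne')
      (by simpa only [tsum_fintype] using hmarg) .of_finite (fun i ↦ (hmeas i).aemeasurable)
      (fun _ _ hij ↦ hindep.indepFun hij) hdist
end

section
/- Let N ≥ 1 and let p', p̂ : Fin N → ℝ be such that 0 ≤ p'_i ≤ 1 and 0 < p̂_i ≤ 1 for every i. Then the DIMP-Loss admits the lower bound −(1/N) Σ_{i} (p'_i / p̂_i) · log p̂_i ≥ −(2/N) Σ_{i} p'_i · log p̂_i + (1/N) Σ_{i} p̂_i · log p̂_i; that is, the weighted cross-entropy with weights p'_i/p̂_i is bounded below by twice the empirical distilled cross-entropy plus the maximum-entropy regularizer term. -/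
open Finset

/- AM-GM gives `w / p + p ≥ 2 * √w ≥ 2 * w`; the proof avoids square roots by applying it to
`w ^ 2 ≤ w`. -/
theorem two_mul_le_div_add_self {K : Type*} [Field K] [LinearOrder K] [IsStrictOrderedRing K]
    {w p : K} (hw0 : 0 ≤ w) (hw1 : w ≤ 1) (hp : 0 < p) : 2 * w ≤ w / p + p := by
  have am_gm : 2 * w * p ≤ w ^ 2 + p ^ 2 := two_mul_le_add_sq w p
  have sq_le : w ^ 2 ≤ w := pow_le_of_le_one hw0 hw1 two_ne_zero
  calc
    2 * w ≤ (w + p ^ 2) / p := (le_div_iff₀ hp).2 (by linarith)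
    _ = w / p + p := by field_simp

theorem div_mul_log_add_mul_log_le {w p : ℝ} (hw0 : 0 ≤ w) (hw1 : w ≤ 1) (hp0 : 0 < p)
    (hp1 : p ≤ 1) : w / p * Real.log p + p * Real.log p ≤ 2 * (w * Real.log p) :=
  calc
    w / p * Real.log p + p * Real.log p = (w / p + p) * Real.log p := by ring
    _ ≤ 2 * w * Real.log p :=
      mul_le_mul_of_nonpos_right (two_mul_le_div_add_self hw0 hw1 hp0)
        (Real.log_nonpos hp0.le hp1)
    _ = 2 * (w * Real.log p) := by ring

theorem dimp_loss_lower_bound_general {ι : Type*} (s : Finset ι) (c p' phat : ι → ℝ)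
    (hc : ∀ i ∈ s, 0 ≤ c i)
    (hp'0 : ∀ i ∈ s, 0 ≤ p' i) (hp'1 : ∀ i ∈ s, p' i ≤ 1)
    (hphat0 : ∀ i ∈ s, 0 < phat i) (hphat1 : ∀ i ∈ s, phat i ≤ 1) :
    -∑ i ∈ s, c i * (p' i / phat i * Real.log (phat i))
      ≥ -(2 * ∑ i ∈ s, c i * (p' i * Real.log (phat i)))
          + ∑ i ∈ s, c i * (phat i * Real.log (phat i)) := by
  have weighted_sum_le :
      ∑ i ∈ s, c i * (p' i / phat i * Real.log (phat i))
          + ∑ i ∈ s, c i * (phat i * Real.log (phat i))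
        ≤ 2 * ∑ i ∈ s, c i * (p' i * Real.log (phat i)) := by
    rw [← sum_add_distrib, mul_sum]
    refine sum_le_sum fun i hi ↦ ?_
    have pointwise :=
      div_mul_log_add_mul_log_le (hp'0 i hi) (hp'1 i hi) (hphat0 i hi) (hphat1 i hi)
    linear_combination mul_le_mul_of_nonneg_left pointwise (hc i hi)
  linarith

/-- Lower bound for the DIMP-Loss: the weighted cross-entropy with weights `p'_i/p̂_i`
is bounded below by twice the empirical distilled cross-entropy plus the
maximum-entropy regularizer term. -/
theorem dimp_loss_lower_bound
    (N : ℕ) (hN : 1 ≤ N) (p' phat : Fin N → ℝ)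
    (hp'0 : ∀ i, 0 ≤ p' i) (hp'1 : ∀ i, p' i ≤ 1)
    (hphat0 : ∀ i, 0 < phat i) (hphat1 : ∀ i, phat i ≤ 1) :
    -(1 / (N : ℝ)) * ∑ i : Fin N, (p' i / phat i) * Real.log (phat i)
      ≥ -(2 / (N : ℝ)) * ∑ i : Fin N, p' i * Real.log (phat i)
          + (1 / (N : ℝ)) * ∑ i : Fin N, phat i * Real.log (phat i) := by
  have weighted_bound := dimp_loss_lower_bound_general univ (fun _ ↦ 1 / (N : ℝ)) p' phat
    (fun _ _ ↦ by positivity) (fun i _ ↦ hp'0 i) (fun i _ ↦ hp'1 i) (fun i _ ↦ hphat0 i)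
    (fun i _ ↦ hphat1 i)
  simp only [← mul_sum] at weighted_bound
  linear_combination weighted_bound
end

section
/- For all real numbers a and b with 0 < a ≤ 1 and 0 ≤ b ≤ 1, one has −(b/a) · log a ≥ −2b · log a + a · log a. -/
theorem two_mul_le_div_add_of_sq_le {K : Type*} [Field K] [LinearOrder K] [IsStrictOrderedRing K]
    {a b c : K} (ha : 0 < a) (hbc : b ^ 2 ≤ c) : 2 * b ≤ c / a + a := by
  rw [div_add' _ _ _ ha.ne', le_div_iff₀ ha]
  calc
    2 * b * a ≤ b ^ 2 + a ^ 2 := two_mul_le_add_sq b a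
    _ ≤ c + a * a := by rw [sq a]; gcongr

/-- Pointwise (single-summand) inequality from which the DIMP-Loss lower bound follows
by summation: for `0 < a ≤ 1` and `0 ≤ b ≤ 1`,
`−(b/a)·log a ≥ −2b·log a + a·log a`. -/
theorem dimp_pointwise_lower_bound (a b : ℝ) (ha0 : 0 < a) (ha1 : a ≤ 1)
    (hb0 : 0 ≤ b) (hb1 : b ≤ 1) :
    -(b / a) * Real.log a ≥ -(2 * b) * Real.log a + a * Real.log a := by
  have b_sq_le : b ^ 2 ≤ b := pow_le_of_le_one hb0 hb1 two_ne_zero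
  have two_mul_b_le : 2 * b ≤ b / a + a := two_mul_le_div_add_of_sq_le ha0 b_sq_le
  have log_a_nonpos : Real.log a ≤ 0 := Real.log_nonpos ha0.le ha1
  rw [ge_iff_le, ← add_mul]
  exact mul_le_mul_of_nonpos_right (by linarith) log_a_nonpos
end
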